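/- Let n ≥ 1. There exists a constant C′ > 0 depending only on n with the following property: for every T > 0, every smooth positive function u : ℝⁿ × [0,T] → (0,∞) satisfying the heat equation ∂u/∂t = Δu, every β > 1, every ρ > 0, every x₀ ∈ ℝⁿ, every x ∈ ℝⁿ with ‖x − x₀‖ < ρ/2, and every t ∈ (0,T], one has ‖∇u(x,t)‖²/u(x,t)² − β·(∂u/∂t)(x,t)/u(x,t) ≤ C′·β²·( β²/(ρ²(β−1)) + 1/t ). -/

import Mathlib

/-- The Euclidean Laplacian of `f : ℝⁿ → ℝ` at `x`: the trace of the Hessian,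
computed as the sum of the second partial derivatives in the coordinate directions. -/
noncomputable def laplacian {n : ℕ} (f : EuclideanSpace ℝ (Fin n) → ℝ)
    (x : EuclideanSpace ℝ (Fin n)) : ℝ :=
  ∑ i, fderiv ℝ (fun y => fderiv ℝ f y (EuclideanSpace.single i 1)) x
    (EuclideanSpace.single i 1)

/-!
For a positive solution `u` of the heat equation, `f = log u` satisfies `∂f/∂t = Δf + |∇f|²`, and
the Bochner identity turns this into `(Δ - ∂ₜ) q = 2 |∇²f|² - 2 ⟨∇f, ∇q⟩` for the quantity
`q = |∇f|² - β ∂f/∂t`. As `q + (β - 1) |∇f|² = -β Δf`, the trace inequality `(Δf)² ≤ n |∇²f|²` makes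
the Hessian term quadratic in `q`. Where `φ q` is maximal, for the cutoff
`φ(x, t) = (t - a) (1 - |x - x₀|² / ρ²)²`, this quadratic term dominates, and the cross term
`⟨∇f, ∇φ⟩` is absorbed by the surplus `(β - 1) q |∇f|²`, so that `φ q` is bounded by the
derivatives of `φ`. Letting `a → 0` gives the estimate with constant `n (5n + 8)`.
-/

open scoped Topology
open Set

section DirectionalDerivative

variable {V : Type*} [NormedAddCommGroup V] [NormedSpace ℝ V] {f g : V → ℝ} {p : V}

/-- The derivative of `f` at `p` in the direction `v`, with the direction first so that it
iterates as an operator on functions; it is `0` where `f` is not differentiable. -/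
noncomputable def dirDeriv (v : V) (f : V → ℝ) (p : V) : ℝ := fderiv ℝ f p v

lemma contDiffAt_dirDeriv {m n : WithTop ℕ∞} (hf : ContDiffAt ℝ n f p) (hmn : m + 1 ≤ n)
    (v : V) : ContDiffAt ℝ m (dirDeriv v f) p :=
  (hf.fderiv_right hmn).clm_apply contDiffAt_const

lemma differentiableAt_dirDeriv (hf : ContDiffAt ℝ 2 f p) (v : V) :
    DifferentiableAt ℝ (dirDeriv v f) p :=
  (contDiffAt_dirDeriv (m := 1) hf (by norm_num) v).differentiableAt one_ne_zero

lemma eventually_differentiableAt {n : ℕ} (hf : ContDiffAt ℝ n f p) (hn : n ≠ 0) :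
    ∀ᶠ x in 𝓝 p, DifferentiableAt ℝ f x :=
  (hf.eventually (by simp)).mono fun _ hx => hx.differentiableAt (by simpa using hn)

lemma dirDeriv_congr (h : f =ᶠ[𝓝 p] g) (v : V) : dirDeriv v f p = dirDeriv v g p := by
  rw [dirDeriv, dirDeriv, h.fderiv_eq]

lemma dirDeriv_add (hf : DifferentiableAt ℝ f p) (hg : DifferentiableAt ℝ g p) (v : V) :
    dirDeriv v (fun x => f x + g x) p = dirDeriv v f p + dirDeriv v g p := by
  simp [dirDeriv, fderiv_fun_add hf hg]

lemma dirDeriv_sub (hf : DifferentiableAt ℝ f p) (hg : DifferentiableAt ℝ g p) (v : V) :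
    dirDeriv v (fun x => f x - g x) p = dirDeriv v f p - dirDeriv v g p := by
  simp [dirDeriv, fderiv_fun_sub hf hg]

lemma dirDeriv_const_mul (c : ℝ) (hf : DifferentiableAt ℝ f p) (v : V) :
    dirDeriv v (fun x => c * f x) p = c * dirDeriv v f p := by
  simp [dirDeriv, fderiv_const_mul hf]

lemma dirDeriv_sum {ι : Type*} {s : Finset ι} {F : ι → V → ℝ}
    (hF : ∀ i ∈ s, DifferentiableAt ℝ (F i) p) (v : V) :
    dirDeriv v (fun x => ∑ i ∈ s, F i x) p = ∑ i ∈ s, dirDeriv v (F i) p := by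
  simp [dirDeriv, fderiv_fun_sum hF]

lemma dirDeriv_mul (hf : DifferentiableAt ℝ f p) (hg : DifferentiableAt ℝ g p) (v : V) :
    dirDeriv v (fun x => f x * g x) p = f p * dirDeriv v g p + g p * dirDeriv v f p := by
  simp [dirDeriv, fderiv_fun_mul hf hg]

lemma dirDeriv_log (hf : DifferentiableAt ℝ f p) (h0 : f p ≠ 0) (v : V) :
    dirDeriv v (fun x => Real.log (f x)) p = dirDeriv v f p / f p := by
  simp [dirDeriv, fderiv.log hf h0, div_eq_inv_mul]

lemma dirDeriv_comm (hf : ContDiffAt ℝ 2 f p) (v w : V) :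
    dirDeriv v (dirDeriv w f) p = dirDeriv w (dirDeriv v f) p := by
  have hf' : DifferentiableAt ℝ (fderiv ℝ f) p :=
    (hf.fderiv_right (m := 1) (by norm_num)).differentiableAt one_ne_zero
  have dirDeriv_dirDeriv (a b : V) : dirDeriv a (dirDeriv b f) p = fderiv ℝ (fderiv ℝ f) p a b := by
    change fderiv ℝ (fun x => fderiv ℝ f x b) p a = _
    simp [fderiv_clm_apply hf' (differentiableAt_const b)]
  rw [dirDeriv_dirDeriv, dirDeriv_dirDeriv]
  exact hf.isSymmSndFDerivAt (by simp) v w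

lemma dirDeriv_dirDeriv_mul (hf : ContDiffAt ℝ 2 f p) (hg : ContDiffAt ℝ 2 g p) (v : V) :
    dirDeriv v (dirDeriv v fun x => f x * g x) p =
      f p * dirDeriv v (dirDeriv v g) p + 2 * (dirDeriv v f p * dirDeriv v g p) +
        g p * dirDeriv v (dirDeriv v f) p := by
  have product_rule : dirDeriv v (fun x => f x * g x) =ᶠ[𝓝 p]
      fun x => f x * dirDeriv v g x + g x * dirDeriv v f x := by
    filter_upwards [eventually_differentiableAt hf two_ne_zero,
      eventually_differentiableAt hg two_ne_zero] with x hfx hgx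
    exact dirDeriv_mul hfx hgx v
  have df := hf.differentiableAt two_ne_zero
  have dg := hg.differentiableAt two_ne_zero
  have df' := differentiableAt_dirDeriv hf v
  have dg' := differentiableAt_dirDeriv hg v
  rw [dirDeriv_congr product_rule, dirDeriv_add (df.fun_mul dg') (dg.fun_mul df'),
    dirDeriv_mul df dg', dirDeriv_mul dg df']
  ring

lemma hasDerivAt_comp_line {v : V} {r : ℝ} (hf : DifferentiableAt ℝ f (p + r • v)) :
    HasDerivAt (fun s : ℝ => f (p + s • v)) (dirDeriv v f (p + r • v)) r := by
  have line : HasDerivAt (fun s : ℝ => p + s • v) v r := by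
    simpa using ((hasDerivAt_id r).smul_const v).const_add p
  exact hf.hasFDerivAt.comp_hasDerivAt r line

end DirectionalDerivative

section SecondDerivativeTest

lemma deriv_deriv_nonpos_of_isLocalMax {h : ℝ → ℝ} {a : ℝ} (hmax : IsLocalMax h a)
    (hcont : ContinuousAt h a) : deriv (deriv h) a ≤ 0 := by
  by_contra! hpos
  have hmin : IsLocalMin h a := isLocalMin_of_deriv_deriv_pos hpos hmax.deriv_eq_zero hcont
  have hconst : h =ᶠ[𝓝 a] fun _ => h a := by
    filter_upwards [hmax, hmin] with r hle hge using le_antisymm hle hge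
  have hzero : deriv (deriv h) a = 0 := by simp [hconst.deriv.deriv_eq]
  exact hpos.ne' hzero

variable {V : Type*} [NormedAddCommGroup V] [NormedSpace ℝ V] {f : V → ℝ} {p v : V}

lemma dirDeriv_eq_zero_of_isLocalMax_line (hf : DifferentiableAt ℝ f p)
    (hmax : IsLocalMax (fun r : ℝ => f (p + r • v)) 0) : dirDeriv v f p = 0 := by
  simpa using hmax.hasDerivAt_eq_zero (hasDerivAt_comp_line (by simpa using hf))

lemma dirDeriv_dirDeriv_nonpos_of_isLocalMax_line (hf : ContDiffAt ℝ 2 f p)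
    (hmax : IsLocalMax (fun r : ℝ => f (p + r • v)) 0) : dirDeriv v (dirDeriv v f) p ≤ 0 := by
  have line_tendsto : Filter.Tendsto (fun r : ℝ => p + r • v) (𝓝 0) (𝓝 p) := by
    have : Continuous fun r : ℝ => p + r • v := by fun_prop
    simpa using this.tendsto 0
  have deriv_eq : deriv (fun r : ℝ => f (p + r • v)) =ᶠ[𝓝 0] fun r => dirDeriv v f (p + r • v) :=
    (line_tendsto.eventually (eventually_differentiableAt hf two_ne_zero)).mono
      fun r hr => (hasDerivAt_comp_line hr).deriv
  have deriv_deriv_eq :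
      deriv (deriv fun r : ℝ => f (p + r • v)) 0 = dirDeriv v (dirDeriv v f) p := by
    rw [deriv_eq.deriv_eq]
    simpa using (hasDerivAt_comp_line (r := 0) (p := p) (v := v)
      (by simpa using differentiableAt_dirDeriv hf v)).deriv
  rw [← deriv_deriv_eq]
  refine deriv_deriv_nonpos_of_isLocalMax hmax (ContinuousAt.comp ?_ (by fun_prop))
  simpa using hf.continuousAt

lemma dirDeriv_nonneg_of_isMaxOn_line_left {s : ℝ} (hs : s < 0) (hf : DifferentiableAt ℝ f p)
    (hmax : IsMaxOn (fun r : ℝ => f (p + r • v)) (Icc s 0) 0) : 0 ≤ dirDeriv v f p := by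
  have slope_tendsto := (hasDerivAt_iff_tendsto_slope.1
    (hasDerivAt_comp_line (r := 0) (p := p) (v := v) (by simpa using hf))).mono_left
      (nhdsLT_le_nhdsNE 0)
  rw [zero_smul, add_zero] at slope_tendsto
  refine ge_of_tendsto slope_tendsto ?_
  filter_upwards [Ioo_mem_nhdsLT hs] with r hr
  rw [slope_def_field]
  exact div_nonneg_of_nonpos (sub_nonpos.2 (hmax ⟨hr.1.le, hr.2.le⟩)) (by linarith [hr.2])

end SecondDerivativeTest

section FrameCalculus

variable {V : Type*} [NormedAddCommGroup V] [NormedSpace ℝ V] {ι : Type*} [Fintype ι]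
  (e : ι → V) {τ : V} {f g : V → ℝ} {p : V} {β : ℝ}

/-- The sum of the second derivatives along the vectors `e i`: the Laplacian when `e` is an
orthonormal frame, and the spatial Laplacian when `e` spans the space directions of space-time. -/
noncomputable def frameLaplacian (f : V → ℝ) (p : V) : ℝ :=
  ∑ i, dirDeriv (e i) (dirDeriv (e i) f) p

/-- The inner product `⟨∇f, ∇g⟩` of the gradients along the frame `e`. -/
noncomputable def gradInner (f g : V → ℝ) (p : V) : ℝ :=
  ∑ i, dirDeriv (e i) f p * dirDeriv (e i) g p

/-- The squared Hilbert–Schmidt norm of the Hessian along the frame `e`. -/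
noncomputable def hessNormSq (f : V → ℝ) (p : V) : ℝ :=
  ∑ i, ∑ j, dirDeriv (e j) (dirDeriv (e i) f) p ^ 2

/-- The Li–Yau quantity `|∇f|² - β ∂f/∂τ`, to be evaluated at `f = log u`. -/
noncomputable def liYau (τ : V) (β : ℝ) (f : V → ℝ) (p : V) : ℝ :=
  gradInner e f f p - β * dirDeriv τ f p

variable {e}

lemma neg_mul_gradInner_le (c : ℝ) {k : ℝ} (hk : 0 < k) :
    -(c * gradInner e f g p) ≤ k * gradInner e f f p + c ^ 2 / (4 * k) * gradInner e g g p := by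
  simp only [gradInner, Finset.mul_sum, ← Finset.sum_neg_distrib, ← Finset.sum_add_distrib]
  refine Finset.sum_le_sum fun i _ => ?_
  have square_nonneg :
      0 ≤ (2 * k * dirDeriv (e i) f p + c * dirDeriv (e i) g p) ^ 2 / (4 * k) := by positivity
  have square_eq : (2 * k * dirDeriv (e i) f p + c * dirDeriv (e i) g p) ^ 2 / (4 * k) =
      k * (dirDeriv (e i) f p * dirDeriv (e i) f p) +
        c ^ 2 / (4 * k) * (dirDeriv (e i) g p * dirDeriv (e i) g p) +
        c * (dirDeriv (e i) f p * dirDeriv (e i) g p) := by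
    field_simp
    ring
  linarith

lemma frameLaplacian_sub (hf : ContDiffAt ℝ 2 f p) (hg : ContDiffAt ℝ 2 g p) :
    frameLaplacian e (fun x => f x - g x) p = frameLaplacian e f p - frameLaplacian e g p := by
  simp only [frameLaplacian, ← Finset.sum_sub_distrib]
  refine Finset.sum_congr rfl fun i _ => ?_
  rw [← dirDeriv_sub (differentiableAt_dirDeriv hf _) (differentiableAt_dirDeriv hg _)]
  refine dirDeriv_congr ?_ _
  filter_upwards [eventually_differentiableAt hf two_ne_zero,
    eventually_differentiableAt hg two_ne_zero] with x hfx hgx using dirDeriv_sub hfx hgx _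

lemma frameLaplacian_const_mul (c : ℝ) (hf : ContDiffAt ℝ 2 f p) :
    frameLaplacian e (fun x => c * f x) p = c * frameLaplacian e f p := by
  simp only [frameLaplacian, Finset.mul_sum]
  refine Finset.sum_congr rfl fun i _ => ?_
  rw [← dirDeriv_const_mul c (differentiableAt_dirDeriv hf _)]
  refine dirDeriv_congr ?_ _
  filter_upwards [eventually_differentiableAt hf two_ne_zero] with x hfx
    using dirDeriv_const_mul c hfx _

lemma frameLaplacian_sum {κ : Type*} [Fintype κ] {F : κ → V → ℝ}
    (hF : ∀ k, ContDiffAt ℝ 2 (F k) p) :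
    frameLaplacian e (fun x => ∑ k, F k x) p = ∑ k, frameLaplacian e (F k) p := by
  simp only [frameLaplacian]
  rw [Finset.sum_comm]
  refine Finset.sum_congr rfl fun i _ => ?_
  rw [← dirDeriv_sum fun k _ => differentiableAt_dirDeriv (hF k) _]
  refine dirDeriv_congr ?_ _
  filter_upwards [Filter.eventually_all.2 fun k => eventually_differentiableAt (hF k) two_ne_zero]
    with x hx using dirDeriv_sum (fun k _ => hx k) _

lemma frameLaplacian_mul (hf : ContDiffAt ℝ 2 f p) (hg : ContDiffAt ℝ 2 g p) :
    frameLaplacian e (fun x => f x * g x) p =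
      f p * frameLaplacian e g p + 2 * gradInner e f g p + g p * frameLaplacian e f p := by
  simp only [frameLaplacian, gradInner, dirDeriv_dirDeriv_mul hf hg, Finset.sum_add_distrib,
    Finset.mul_sum]

lemma frameLaplacian_dirDeriv (hf : ContDiffAt ℝ 3 f p) (v : V) :
    frameLaplacian e (dirDeriv v f) p = dirDeriv v (frameLaplacian e f) p := by
  have hf' (w : V) : ContDiffAt ℝ 2 (dirDeriv w f) p := contDiffAt_dirDeriv hf (by norm_num) w
  have comm_nhds (w : V) : dirDeriv w (dirDeriv v f) =ᶠ[𝓝 p] dirDeriv v (dirDeriv w f) :=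
    (hf.eventually (by simp)).mono fun x hx => dirDeriv_comm (hx.of_le (by norm_num)) w v
  calc frameLaplacian e (dirDeriv v f) p
      = ∑ i, dirDeriv v (dirDeriv (e i) (dirDeriv (e i) f)) p :=
        Finset.sum_congr rfl fun i _ =>
          (dirDeriv_congr (comm_nhds (e i)) _).trans (dirDeriv_comm (hf' (e i)) _ _)
    _ = dirDeriv v (frameLaplacian e f) p :=
        (dirDeriv_sum (fun i _ => differentiableAt_dirDeriv (hf' (e i)) _) v).symm

lemma contDiffAt_gradInner_self {m n : WithTop ℕ∞} (hf : ContDiffAt ℝ n f p) (hmn : m + 1 ≤ n) :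
    ContDiffAt ℝ m (gradInner e f f) p :=
  ContDiffAt.sum fun _ _ => (contDiffAt_dirDeriv hf hmn _).mul (contDiffAt_dirDeriv hf hmn _)

lemma dirDeriv_gradInner_self (hf : ContDiffAt ℝ 2 f p) (v : V) :
    dirDeriv v (gradInner e f f) p = 2 * gradInner e f (dirDeriv v f) p := by
  have hf' := differentiableAt_dirDeriv hf
  change dirDeriv v (fun x => ∑ i, dirDeriv (e i) f x * dirDeriv (e i) f x) p = _
  rw [dirDeriv_sum (fun i _ => (hf' (e i)).fun_mul (hf' (e i))), gradInner, Finset.mul_sum]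
  refine Finset.sum_congr rfl fun i _ => ?_
  rw [dirDeriv_mul (hf' (e i)) (hf' (e i)), dirDeriv_comm hf]
  ring

lemma bochner_identity (hf : ContDiffAt ℝ 3 f p) :
    frameLaplacian e (gradInner e f f) p =
      2 * hessNormSq e f p + 2 * gradInner e f (frameLaplacian e f) p := by
  have hf' (i : ι) : ContDiffAt ℝ 2 (dirDeriv (e i) f) p := contDiffAt_dirDeriv hf (by norm_num) _
  calc frameLaplacian e (gradInner e f f) p
      = ∑ i, frameLaplacian e (fun x => dirDeriv (e i) f x * dirDeriv (e i) f x) p :=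
        frameLaplacian_sum fun i => (hf' i).mul (hf' i)
    _ = ∑ i, (2 * ∑ j, dirDeriv (e j) (dirDeriv (e i) f) p ^ 2 +
          2 * (dirDeriv (e i) f p * dirDeriv (e i) (frameLaplacian e f) p)) := by
        refine Finset.sum_congr rfl fun i _ => ?_
        rw [frameLaplacian_mul (hf' i) (hf' i), frameLaplacian_dirDeriv hf, gradInner]
        simp only [pow_two]
        ring
    _ = 2 * hessNormSq e f p + 2 * gradInner e f (frameLaplacian e f) p := by
        simp only [Finset.sum_add_distrib, ← Finset.mul_sum, hessNormSq, gradInner]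

lemma sq_frameLaplacian_le : frameLaplacian e f p ^ 2 ≤ Fintype.card ι * hessNormSq e f p :=
  calc frameLaplacian e f p ^ 2
      ≤ Fintype.card ι * ∑ i, dirDeriv (e i) (dirDeriv (e i) f) p ^ 2 :=
        sq_sum_le_card_mul_sum_sq
    _ ≤ Fintype.card ι * hessNormSq e f p := by
        refine mul_le_mul_of_nonneg_left (Finset.sum_le_sum fun i _ => ?_) (Nat.cast_nonneg _)
        exact Finset.single_le_sum (f := fun j => dirDeriv (e j) (dirDeriv (e i) f) p ^ 2)
          (fun _ _ => sq_nonneg _) (Finset.mem_univ i)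

lemma dirDeriv_log_of_heat {u : V → ℝ} (hu : ContDiffAt ℝ 2 u p) (hpos : 0 < u p)
    (heat : dirDeriv τ u p = frameLaplacian e u p) :
    dirDeriv τ (fun x => Real.log (u x)) p =
      frameLaplacian e (fun x => Real.log (u x)) p +
        gradInner e (fun x => Real.log (u x)) (fun x => Real.log (u x)) p := by
  set f : V → ℝ := fun x => Real.log (u x)
  have hf : ContDiffAt ℝ 2 f p := hu.log hpos.ne'
  have dirDeriv_eq (v : V) : dirDeriv v u =ᶠ[𝓝 p] fun x => u x * dirDeriv v f x := by
    filter_upwards [eventually_differentiableAt hu two_ne_zero,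
      hu.continuousAt.eventually_ne hpos.ne'] with x hux hx
    rw [dirDeriv_log hux hx, mul_div_cancel₀ _ hx]
  have dirDeriv_dirDeriv_eq (v : V) : dirDeriv v (dirDeriv v u) p =
      u p * (dirDeriv v (dirDeriv v f) p + dirDeriv v f p * dirDeriv v f p) := by
    rw [dirDeriv_congr (dirDeriv_eq v),
      dirDeriv_mul (hu.differentiableAt two_ne_zero) (differentiableAt_dirDeriv hf v),
      (dirDeriv_eq v).eq_of_nhds]
    ring
  refine mul_left_cancel₀ hpos.ne' ?_
  rw [← (dirDeriv_eq τ).eq_of_nhds, heat]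
  simp only [frameLaplacian, gradInner, dirDeriv_dirDeriv_eq, ← Finset.mul_sum,
    Finset.sum_add_distrib]

lemma liYau_log {u : V → ℝ} (hu : DifferentiableAt ℝ u p) (h0 : u p ≠ 0) :
    liYau e τ β (fun x => Real.log (u x)) p =
      gradInner e u u p / u p ^ 2 - β * dirDeriv τ u p / u p := by
  simp only [liYau, gradInner, dirDeriv_log hu h0, Finset.sum_div, ← pow_two, div_pow,
    mul_div_assoc]

lemma contDiffAt_liYau {m n : WithTop ℕ∞} (hf : ContDiffAt ℝ n f p) (hmn : m + 1 ≤ n) (τ : V)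
    (β : ℝ) : ContDiffAt ℝ m (liYau e τ β f) p :=
  (contDiffAt_gradInner_self hf hmn).sub (contDiffAt_const.mul (contDiffAt_dirDeriv hf hmn τ))

lemma dirDeriv_liYau (hf : ContDiffAt ℝ 2 f p) (v : V) :
    dirDeriv v (liYau e τ β f) p =
      dirDeriv v (gradInner e f f) p - β * dirDeriv v (dirDeriv τ f) p := by
  have hgrad : DifferentiableAt ℝ (gradInner e f f) p :=
    (contDiffAt_gradInner_self (m := 1) hf (by norm_num)).differentiableAt one_ne_zero
  have hτ := differentiableAt_dirDeriv hf τ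
  exact (dirDeriv_sub hgrad (hτ.const_mul β) v).trans (by rw [dirDeriv_const_mul β hτ])

-- Differentiating `∂f/∂τ = Δf + |∇f|²` eliminates the third derivatives of `f`.
lemma frameLaplacian_liYau_sub_dirDeriv (hf : ContDiffAt ℝ 3 f p)
    (heat : dirDeriv τ f =ᶠ[𝓝 p] fun x => frameLaplacian e f x + gradInner e f f x) :
    frameLaplacian e (liYau e τ β f) p - dirDeriv τ (liYau e τ β f) p =
      2 * hessNormSq e f p - 2 * gradInner e f (liYau e τ β f) p := by
  have hf2 : ContDiffAt ℝ 2 f p := hf.of_le (by norm_num)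
  have hgrad : ContDiffAt ℝ 2 (gradInner e f f) p := contDiffAt_gradInner_self hf (by norm_num)
  have hτ : ContDiffAt ℝ 2 (dirDeriv τ f) p := contDiffAt_dirDeriv hf (by norm_num) τ
  have dirDeriv_frameLaplacian (v : V) : dirDeriv v (frameLaplacian e f) p =
      dirDeriv v (dirDeriv τ f) p - dirDeriv v (gradInner e f f) p := by
    rw [← dirDeriv_sub (hτ.differentiableAt two_ne_zero) (hgrad.differentiableAt two_ne_zero)]
    exact dirDeriv_congr (heat.mono fun x hx => eq_sub_of_add_eq hx.symm) v
  have gradInner_frameLaplacian : gradInner e f (frameLaplacian e f) p =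
      gradInner e f (dirDeriv τ f) p - gradInner e f (gradInner e f f) p := by
    simp only [gradInner, dirDeriv_frameLaplacian, mul_sub, Finset.sum_sub_distrib]
  have gradInner_liYau : gradInner e f (liYau e τ β f) p =
      gradInner e f (gradInner e f f) p - β * gradInner e f (dirDeriv τ f) p := by
    simp only [gradInner, dirDeriv_liYau hf2, mul_sub, Finset.sum_sub_distrib, Finset.mul_sum,
      mul_left_comm β]
  have frameLaplacian_liYau : frameLaplacian e (liYau e τ β f) p =
      frameLaplacian e (gradInner e f f) p - β * frameLaplacian e (dirDeriv τ f) p :=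
    (frameLaplacian_sub hgrad (contDiffAt_const.mul hτ)).trans
      (by rw [frameLaplacian_const_mul β hτ])
  rw [frameLaplacian_liYau, bochner_identity hf, frameLaplacian_dirDeriv hf,
    dirDeriv_frameLaplacian, gradInner_frameLaplacian, gradInner_liYau, dirDeriv_liYau hf2,
    dirDeriv_gradInner_self hf2]
  ring

lemma liYau_mul_le_hessNormSq
    (heat : dirDeriv τ f p = frameLaplacian e f p + gradInner e f f p) :
    liYau e τ β f p * (liYau e τ β f p + 2 * (β - 1) * gradInner e f f p) ≤
      Fintype.card ι * β ^ 2 * hessNormSq e f p := by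
  have trace_eq : liYau e τ β f p + (β - 1) * gradInner e f f p = -(β * frameLaplacian e f p) := by
    rw [liYau, heat]
    ring
  calc liYau e τ β f p * (liYau e τ β f p + 2 * (β - 1) * gradInner e f f p)
      ≤ (liYau e τ β f p + (β - 1) * gradInner e f f p) ^ 2 := by
        nlinarith [sq_nonneg ((β - 1) * gradInner e f f p)]
    _ = β ^ 2 * frameLaplacian e f p ^ 2 := by rw [trace_eq]; ring
    _ ≤ β ^ 2 * (Fintype.card ι * hessNormSq e f p) := by gcongr; exact sq_frameLaplacian_le
    _ = Fintype.card ι * β ^ 2 * hessNormSq e f p := by ring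

end FrameCalculus

section MaximumPoint

variable {V : Type*} [NormedAddCommGroup V] [NormedSpace ℝ V] {ι : Type*} [Fintype ι]
  {e : ι → V} {τ : V} {f φ q : V → ℝ} {p : V} {β : ℝ}

/-- The derivative conditions that hold at a maximum of `h` over a space-time cylinder which is
interior in the space directions `e` but possibly terminal in the time direction `τ`. -/
structure ParabolicMaxConditions (e : ι → V) (τ : V) (h : V → ℝ) (p : V) : Prop where
  dirDeriv_eq_zero (i : ι) : dirDeriv (e i) h p = 0
  frameLaplacian_nonpos : frameLaplacian e h p ≤ 0
  dirDeriv_nonneg : 0 ≤ dirDeriv τ h p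

lemma mul_gradInner_eq_neg (hφ : DifferentiableAt ℝ φ p) (hq : DifferentiableAt ℝ q p)
    (hcrit : ∀ i, dirDeriv (e i) (fun x => φ x * q x) p = 0) (g : V → ℝ) :
    φ p * gradInner e g q p = -(q p * gradInner e g φ p) := by
  simp only [gradInner, Finset.mul_sum, ← Finset.sum_neg_distrib]
  refine Finset.sum_congr rfl fun i _ => ?_
  linear_combination dirDeriv (e i) g p * (dirDeriv_mul hφ hq (e i)).symm.trans (hcrit i)

lemma localized_liYau_nonpos (hf : ContDiffAt ℝ 3 f p) (hφ : ContDiffAt ℝ 2 φ p) (hφ0 : φ p ≠ 0)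
    (heat : dirDeriv τ f =ᶠ[𝓝 p] fun x => frameLaplacian e f x + gradInner e f f x)
    (hmax : ParabolicMaxConditions e τ (fun x => φ x * liYau e τ β f x) p) :
    2 * φ p * hessNormSq e f p + liYau e τ β f p *
      (2 * gradInner e f φ p - 2 * (gradInner e φ φ p / φ p) +
        frameLaplacian e φ p - dirDeriv τ φ p) ≤ 0 := by
  have hq : ContDiffAt ℝ 2 (liYau e τ β f) p := contDiffAt_liYau hf (by norm_num) τ β
  have dφ := hφ.differentiableAt two_ne_zero
  have dq := hq.differentiableAt two_ne_zero
  have evolution := frameLaplacian_liYau_sub_dirDeriv (β := β) hf heat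
  have crit := mul_gradInner_eq_neg dφ dq hmax.dirDeriv_eq_zero
  have gradInner_cutoff : gradInner e φ (liYau e τ β f) p =
      -(liYau e τ β f p * (gradInner e φ φ p / φ p)) := by
    rw [← mul_div_assoc, ← neg_div, eq_div_iff hφ0, mul_comm, crit φ]
  have heat_operator_nonpos :
      frameLaplacian e (fun x => φ x * liYau e τ β f x) p -
        dirDeriv τ (fun x => φ x * liYau e τ β f x) p ≤ 0 :=
    sub_nonpos.2 (hmax.frameLaplacian_nonpos.trans hmax.dirDeriv_nonneg)
  rw [frameLaplacian_mul hφ hq, dirDeriv_mul dφ dq, gradInner_cutoff] at heat_operator_nonpos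
  linear_combination heat_operator_nonpos - φ p * evolution + 2 * crit f

-- The AM-GM inequality absorbs the cross term `⟨∇f, ∇φ⟩` into the `|∇f|²` gained from the Hessian.
lemma mul_liYau_le_of_parabolicMaxConditions (hβ : 1 < β) (hf : ContDiffAt ℝ 3 f p)
    (hφ : ContDiffAt ℝ 2 φ p) (hφ0 : 0 < φ p) (hq0 : 0 < liYau e τ β f p)
    (heat : dirDeriv τ f =ᶠ[𝓝 p] fun x => frameLaplacian e f x + gradInner e f f x)
    (hmax : ParabolicMaxConditions e τ (fun x => φ x * liYau e τ β f x) p) :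
    φ p * liYau e τ β f p ≤ Fintype.card ι * β ^ 2 / 2 *
      ((Fintype.card ι * β ^ 2 / (4 * (β - 1)) + 2) * (gradInner e φ φ p / φ p) -
        frameLaplacian e φ p + dirDeriv τ φ p) := by
  set c : ℝ := Fintype.card ι * β ^ 2
  set Q := liYau e τ β f p
  have hβ1 : 0 < β - 1 := sub_pos.2 hβ
  have trace_bound : Q * (Q + 2 * (β - 1) * gradInner e f f p) ≤ c * hessNormSq e f p :=
    liYau_mul_le_hessNormSq heat.eq_of_nhds
  have localized := localized_liYau_nonpos hf hφ hφ0.ne' heat hmax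
  have young := neg_mul_gradInner_le (e := e) (f := f) (g := φ) (p := p) c
    (by positivity : 0 < 2 * (β - 1) * φ p)
  have young_coefficient : c ^ 2 / (4 * (2 * (β - 1) * φ p)) * gradInner e φ φ p =
      c / 2 * (c / (4 * (β - 1)) * (gradInner e φ φ p / φ p)) := by
    field_simp
  have divided : φ p * (Q + 2 * (β - 1) * gradInner e f f p) + c / 2 *
      (2 * gradInner e f φ p - 2 * (gradInner e φ φ p / φ p) +
        frameLaplacian e φ p - dirDeriv τ φ p) ≤ 0 := by
    refine nonpos_of_mul_nonpos_right ?_ hq0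
    linear_combination φ p * trace_bound + c / 2 * localized
  linear_combination divided + young + young_coefficient

end MaximumPoint

section SpaceTime

variable {E : Type*} [NormedAddCommGroup E]

/-- The unit time direction of the space-time `E × ℝ`. -/
def timeDir : E × ℝ := (0, 1)

lemma dirDeriv_snd_sub_const [NormedSpace ℝ E] (a : ℝ) (v p : E × ℝ) :
    dirDeriv v (fun x => x.2 - a) p = v.2 := by
  simp [dirDeriv, fderiv_sub_const, fderiv_snd]

end SpaceTime

section Cutoff

variable {E : Type*} [NormedAddCommGroup E] {x₀ : E} {ρ : ℝ}

/-- The paraboloid `1 - ‖x - x₀‖² / ρ²`, positive exactly over the ball of radius `ρ > 0`. -/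
noncomputable def paraboloid (x₀ : E) (ρ : ℝ) (p : E × ℝ) : ℝ := 1 - ‖p.1 - x₀‖ ^ 2 / ρ ^ 2

/-- The cutoff function of the cylinder over the ball of radius `ρ` with initial time `a`. It
vanishes at time `a` and on the lateral boundary, and squaring the paraboloid keeps
`|∇φ|² / φ` bounded there. -/
noncomputable def cylinderCutoff (x₀ : E) (ρ a : ℝ) (p : E × ℝ) : ℝ :=
  (p.2 - a) * (paraboloid x₀ ρ p * paraboloid x₀ ρ p)

lemma paraboloid_le_one (p : E × ℝ) : paraboloid x₀ ρ p ≤ 1 :=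
  sub_le_self _ (by positivity)

lemma paraboloid_nonneg (hρ : 0 < ρ) {p : E × ℝ} (hp : p.1 ∈ Metric.closedBall x₀ ρ) :
    0 ≤ paraboloid x₀ ρ p := by
  rw [mem_closedBall_iff_norm] at hp
  rw [paraboloid, sub_nonneg, div_le_one (by positivity)]
  gcongr

lemma mem_ball_of_paraboloid_pos (hρ : 0 < ρ) {p : E × ℝ} (hp : 0 < paraboloid x₀ ρ p) :
    p.1 ∈ Metric.ball x₀ ρ := by
  rw [paraboloid, sub_pos, div_lt_one (by positivity)] at hp
  exact mem_ball_iff_norm.2 (lt_of_pow_lt_pow_left₀ 2 hρ.le hp)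

lemma three_quarters_le_paraboloid (hρ : 0 < ρ) {p : E × ℝ} (hp : ‖p.1 - x₀‖ ≤ ρ / 2) :
    3 / 4 ≤ paraboloid x₀ ρ p := by
  have ratio_le : ‖p.1 - x₀‖ ^ 2 / ρ ^ 2 ≤ (ρ / 2) ^ 2 / ρ ^ 2 := by gcongr
  have ratio_eq : (ρ / 2) ^ 2 / ρ ^ 2 = 1 / 4 := by field_simp; norm_num
  rw [paraboloid]
  linarith

end Cutoff

section CutoffDerivatives

variable {E : Type*} [NormedAddCommGroup E] [InnerProductSpace ℝ E] {ι : Type*} [Fintype ι]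
  (b : OrthonormalBasis ι ℝ E) {x₀ : E} {ρ a : ℝ}

/-- The space directions of the space-time `E × ℝ` given by an orthonormal basis of `E`. -/
noncomputable def spaceFrame (i : ι) : E × ℝ := (b i, 0)

lemma contDiff_paraboloid {n : WithTop ℕ∞} : ContDiff ℝ n (paraboloid x₀ ρ) :=
  contDiff_const.sub (((contDiff_fst.sub contDiff_const).norm_sq ℝ).div_const _)

lemma contDiff_cylinderCutoff {n : WithTop ℕ∞} : ContDiff ℝ n (cylinderCutoff x₀ ρ a) :=
  (contDiff_snd.sub contDiff_const).mul (contDiff_paraboloid.mul contDiff_paraboloid)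

lemma dirDeriv_paraboloid (v p : E × ℝ) :
    dirDeriv v (paraboloid x₀ ρ) p = -(2 / ρ ^ 2) * inner ℝ (p.1 - x₀) v.1 := by
  have h := (((hasFDerivAt_fst (𝕜 := ℝ) (p := p)).sub_const x₀).norm_sq.mul_const
    (ρ ^ 2)⁻¹).const_sub 1
  simp only [← div_eq_mul_inv] at h
  change fderiv ℝ (fun x : E × ℝ => 1 - ‖x.1 - x₀‖ ^ 2 / ρ ^ 2) p v = _
  rw [h.fderiv]
  simp only [map_sub, ContinuousLinearMap.sub_comp, neg_apply, smul_apply, sub_apply,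
    ContinuousLinearMap.comp_apply, ContinuousLinearMap.coe_fst', coe_innerSL_apply, nsmul_eq_mul,
    Nat.cast_ofNat, smul_eq_mul, inner_sub_left]
  ring

lemma gradInner_paraboloid_self (p : E × ℝ) :
    gradInner (spaceFrame b) (paraboloid x₀ ρ) (paraboloid x₀ ρ) p =
      4 / ρ ^ 4 * ‖p.1 - x₀‖ ^ 2 := by
  simp only [gradInner, dirDeriv_paraboloid, spaceFrame]
  rw [← b.sum_sq_inner_left, Finset.mul_sum]
  exact Finset.sum_congr rfl fun i _ => by ring

lemma frameLaplacian_paraboloid (p : E × ℝ) :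
    frameLaplacian (spaceFrame b) (paraboloid x₀ ρ) p = -(2 * Fintype.card ι / ρ ^ 2) := by
  have second_deriv (i : ι) : dirDeriv (spaceFrame b i)
      (dirDeriv (spaceFrame b i) (paraboloid x₀ ρ)) p = -(2 / ρ ^ 2) := by
    have h := (((hasFDerivAt_fst (𝕜 := ℝ) (p := p)).sub_const x₀).inner ℝ
      (hasFDerivAt_const (b i) p)).const_mul (-(2 / ρ ^ 2))
    rw [funext (dirDeriv_paraboloid (spaceFrame b i)), dirDeriv, spaceFrame, h.fderiv]
    simp
  simp only [frameLaplacian, second_deriv, Finset.sum_const, Finset.card_univ, nsmul_eq_mul]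
  ring

lemma dirDeriv_cylinderCutoff (v p : E × ℝ) :
    dirDeriv v (cylinderCutoff x₀ ρ a) p =
      (p.2 - a) * (2 * paraboloid x₀ ρ p * dirDeriv v (paraboloid x₀ ρ) p) +
        v.2 * paraboloid x₀ ρ p ^ 2 := by
  have hψ : DifferentiableAt ℝ (paraboloid x₀ ρ) p :=
    (contDiff_paraboloid (n := 1)).differentiable one_ne_zero p
  refine (dirDeriv_mul (differentiableAt_snd.sub_const a) (hψ.fun_mul hψ) v).trans ?_
  rw [dirDeriv_snd_sub_const, dirDeriv_mul hψ hψ]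
  ring

lemma gradInner_cylinderCutoff_self (p : E × ℝ) :
    gradInner (spaceFrame b) (cylinderCutoff x₀ ρ a) (cylinderCutoff x₀ ρ a) p =
      4 * (p.2 - a) * gradInner (spaceFrame b) (paraboloid x₀ ρ) (paraboloid x₀ ρ) p *
        cylinderCutoff x₀ ρ a p := by
  simp only [gradInner, dirDeriv_cylinderCutoff, spaceFrame, Finset.mul_sum, Finset.sum_mul,
    cylinderCutoff]
  exact Finset.sum_congr rfl fun i _ => by ring

lemma frameLaplacian_cylinderCutoff (p : E × ℝ) :
    frameLaplacian (spaceFrame b) (cylinderCutoff x₀ ρ a) p =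
      (p.2 - a) * (2 * paraboloid x₀ ρ p * frameLaplacian (spaceFrame b) (paraboloid x₀ ρ) p +
        2 * gradInner (spaceFrame b) (paraboloid x₀ ρ) (paraboloid x₀ ρ) p) := by
  have hψ : ContDiffAt ℝ 2 (paraboloid x₀ ρ) p := contDiff_paraboloid.contDiffAt
  have htime : ContDiffAt ℝ 2 (fun x : E × ℝ => x.2 - a) p := by fun_prop
  have dirDeriv_time (i : ι) : dirDeriv (spaceFrame b i) (fun x : E × ℝ => x.2 - a) = 0 :=
    funext fun x => dirDeriv_snd_sub_const a _ x
  have dirDeriv_zero (v : E × ℝ) : dirDeriv v (0 : E × ℝ → ℝ) p = 0 := by simp [dirDeriv]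
  refine (frameLaplacian_mul htime (hψ.mul hψ)).trans ?_
  rw [frameLaplacian_mul hψ hψ]
  simp only [gradInner, frameLaplacian, dirDeriv_time, dirDeriv_zero, Pi.zero_apply, zero_mul,
    Finset.sum_const_zero]
  ring

lemma cylinderCutoff_error_le (hρ : 0 < ρ) {k : ℝ} (hk : 0 ≤ k) {p : E × ℝ}
    (hp : p.1 ∈ Metric.closedBall x₀ ρ) (hφ : 0 < cylinderCutoff x₀ ρ a p) (ha : a ≤ p.2) :
    (k + 2) * (gradInner (spaceFrame b) (cylinderCutoff x₀ ρ a) (cylinderCutoff x₀ ρ a) p /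
        cylinderCutoff x₀ ρ a p) -
      frameLaplacian (spaceFrame b) (cylinderCutoff x₀ ρ a) p +
      dirDeriv timeDir (cylinderCutoff x₀ ρ a) p ≤
    (16 * k + 32 + 4 * Fintype.card ι) * ((p.2 - a) / ρ ^ 2) + 1 := by
  have hs : 0 ≤ p.2 - a := sub_nonneg.2 ha
  have hψ0 := paraboloid_nonneg hρ hp
  have hψ1 := paraboloid_le_one (x₀ := x₀) (ρ := ρ) p
  set Γ := gradInner (spaceFrame b) (paraboloid x₀ ρ) (paraboloid x₀ ρ) p with hΓ
  rw [gradInner_paraboloid_self] at hΓ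
  have hΓ0 : 0 ≤ Γ := by rw [hΓ]; positivity
  have hΓ1 : Γ ≤ 4 / ρ ^ 2 := by
    rw [mem_closedBall_iff_norm] at hp
    calc Γ ≤ 4 / ρ ^ 4 * ρ ^ 2 := by rw [hΓ]; gcongr
      _ = 4 / ρ ^ 2 := by field_simp
  have time_term : dirDeriv timeDir (cylinderCutoff x₀ ρ a) p = paraboloid x₀ ρ p ^ 2 := by
    simp [dirDeriv_cylinderCutoff, dirDeriv_paraboloid, timeDir]
  rw [gradInner_cylinderCutoff_self, mul_div_cancel_right₀ _ hφ.ne',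
    frameLaplacian_cylinderCutoff, frameLaplacian_paraboloid, time_term]
  calc (k + 2) * (4 * (p.2 - a) * Γ) - (p.2 - a) *
        (2 * paraboloid x₀ ρ p * -(2 * Fintype.card ι / ρ ^ 2) + 2 * Γ) + paraboloid x₀ ρ p ^ 2
      ≤ (k + 2) * (4 * (p.2 - a) * Γ) +
          (p.2 - a) * (2 * paraboloid x₀ ρ p * (2 * Fintype.card ι / ρ ^ 2)) +
          paraboloid x₀ ρ p ^ 2 := by linarith [mul_nonneg hs hΓ0]
    _ ≤ (k + 2) * (4 * (p.2 - a) * (4 / ρ ^ 2)) +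
          (p.2 - a) * (2 * 1 * (2 * Fintype.card ι / ρ ^ 2)) + 1 ^ 2 := by gcongr
    _ = (16 * k + 32 + 4 * Fintype.card ι) * ((p.2 - a) / ρ ^ 2) + 1 := by ring

end CutoffDerivatives

section CylinderEstimate

variable {E : Type*} [NormedAddCommGroup E] [InnerProductSpace ℝ E] {ι : Type*} [Fintype ι]
  {b : OrthonormalBasis ι ℝ E} {x₀ : E} {ρ a t β : ℝ} {f : E × ℝ → ℝ} {p : E × ℝ}

lemma parabolicMaxConditions_of_isMaxOn_cylinder (hf : ContDiffAt ℝ 2 f p)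
    (hmax : IsMaxOn f (Metric.closedBall x₀ ρ ×ˢ Icc a t) p) (hx : p.1 ∈ Metric.ball x₀ ρ)
    (hs : p.2 ∈ Ioc a t) : ParabolicMaxConditions (spaceFrame b) timeDir f p := by
  have isLocalMax_space (i : ι) : IsLocalMax (fun r : ℝ => f (p + r • spaceFrame b i)) 0 := by
    have line_continuous : ContinuousAt (fun r : ℝ => p.1 + r • b i) 0 := by fun_prop
    have mem_ball_nhds : ∀ᶠ r in 𝓝 (0 : ℝ), p.1 + r • b i ∈ Metric.ball x₀ ρ :=
      line_continuous.eventually_mem (Metric.isOpen_ball.mem_nhds (by simpa using hx))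
    filter_upwards [mem_ball_nhds] with r hr
    simpa using hmax (show p + r • spaceFrame b i ∈ _ from
      ⟨Metric.ball_subset_closedBall hr, by simpa [spaceFrame] using ⟨hs.1.le, hs.2⟩⟩)
  have isMaxOn_time : IsMaxOn (fun r : ℝ => f (p + r • timeDir)) (Icc (a - p.2) 0) 0 := by
    intro r hr
    simpa using hmax (show p + r • timeDir ∈ _ from
      ⟨by simpa [timeDir] using Metric.ball_subset_closedBall hx, by
        simp only [timeDir, Prod.snd_add, Prod.smul_snd, smul_eq_mul, mul_one]
        constructor <;> linarith [hr.1, hr.2, hs.2]⟩)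
  have hdiff := hf.differentiableAt two_ne_zero
  exact
    { dirDeriv_eq_zero i := dirDeriv_eq_zero_of_isLocalMax_line hdiff (isLocalMax_space i)
      frameLaplacian_nonpos := Finset.sum_nonpos fun i _ =>
        dirDeriv_dirDeriv_nonpos_of_isLocalMax_line hf (isLocalMax_space i)
      dirDeriv_nonneg :=
        dirDeriv_nonneg_of_isMaxOn_line_left (sub_neg.2 hs.1) hdiff isMaxOn_time }

lemma cutoff_coefficient_le (hβ : 1 < β) (d : ℕ) :
    16 * (d * β ^ 2 / (4 * (β - 1))) + 32 + 4 * d ≤ (5 * d + 8) * (β ^ 2 / (β - 1)) := by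
  have four_le : 4 ≤ β ^ 2 / (β - 1) := by
    rw [le_div_iff₀ (sub_pos.2 hβ)]
    linarith [sq_nonneg (β - 2)]
  have rewrite_div : 16 * (d * β ^ 2 / (4 * (β - 1))) = 4 * d * (β ^ 2 / (β - 1)) := by
    rw [mul_div_mul_comm]
    ring
  rw [rewrite_div]
  linarith [mul_le_mul_of_nonneg_left four_le (by positivity : 0 ≤ (d + 8 : ℝ))]

lemma cylinderCutoff_mul_liYau_le_of_isMaxOn (hβ : 1 < β) (hρ : 0 < ρ)
    (hf : ContDiffAt ℝ 3 f p)
    (heat : dirDeriv timeDir f =ᶠ[𝓝 p] fun x =>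
      frameLaplacian (spaceFrame b) f x + gradInner (spaceFrame b) f f x)
    (hx : p.1 ∈ Metric.ball x₀ ρ) (hs : p.2 ∈ Ioc a t) (hφ : 0 < cylinderCutoff x₀ ρ a p)
    (hq : 0 < liYau (spaceFrame b) timeDir β f p)
    (hmax : IsMaxOn (fun x => cylinderCutoff x₀ ρ a x * liYau (spaceFrame b) timeDir β f x)
      (Metric.closedBall x₀ ρ ×ˢ Icc a t) p) :
    cylinderCutoff x₀ ρ a p * liYau (spaceFrame b) timeDir β f p ≤
      Fintype.card ι * β ^ 2 / 2 *
        ((5 * Fintype.card ι + 8) * (β ^ 2 / (ρ ^ 2 * (β - 1))) * (t - a) + 1) := by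
  have hβ1 : 0 < β - 1 := sub_pos.2 hβ
  have hcutoff : ContDiffAt ℝ 2 (cylinderCutoff x₀ ρ a) p := contDiff_cylinderCutoff.contDiffAt
  have conditions := parabolicMaxConditions_of_isMaxOn_cylinder (b := b)
    (hcutoff.mul (contDiffAt_liYau hf (by norm_num) timeDir β)) hmax hx hs
  have hsa : 0 ≤ p.2 - a := sub_nonneg.2 hs.1.le
  calc cylinderCutoff x₀ ρ a p * liYau (spaceFrame b) timeDir β f p
      ≤ _ := mul_liYau_le_of_parabolicMaxConditions hβ hf hcutoff hφ hq heat conditions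
    _ ≤ Fintype.card ι * β ^ 2 / 2 * ((16 * (Fintype.card ι * β ^ 2 / (4 * (β - 1))) + 32 +
          4 * Fintype.card ι) * ((p.2 - a) / ρ ^ 2) + 1) :=
        mul_le_mul_of_nonneg_left (cylinderCutoff_error_le b hρ (by positivity)
          (Metric.ball_subset_closedBall hx) hφ hs.1.le) (by positivity)
    _ ≤ Fintype.card ι * β ^ 2 / 2 *
          ((5 * Fintype.card ι + 8) * (β ^ 2 / (β - 1)) * ((t - a) / ρ ^ 2) + 1) := by
        gcongr
        · exact cutoff_coefficient_le hβ _
        · exact hs.2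
    _ = _ := by field_simp

lemma cylinderCutoff_mul_liYau_le (hβ : 1 < β) (hρ : 0 < ρ)
    (hf : ∀ p ∈ Metric.closedBall x₀ ρ ×ˢ Icc a t, ContDiffAt ℝ 3 f p)
    (heat : ∀ p ∈ Metric.ball x₀ ρ ×ˢ Ioc a t, dirDeriv timeDir f =ᶠ[𝓝 p] fun x =>
      frameLaplacian (spaceFrame b) f x + gradInner (spaceFrame b) f f x)
    (hp : p ∈ Metric.closedBall x₀ ρ ×ˢ Icc a t) :
    cylinderCutoff x₀ ρ a p * liYau (spaceFrame b) timeDir β f p ≤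
      Fintype.card ι * β ^ 2 / 2 *
        ((5 * Fintype.card ι + 8) * (β ^ 2 / (ρ ^ 2 * (β - 1))) * (t - a) + 1) := by
  have := b.toBasis.finiteDimensional_of_finite
  have := FiniteDimensional.proper_real E
  have hcont : ContinuousOn
      (fun x => cylinderCutoff x₀ ρ a x * liYau (spaceFrame b) timeDir β f x)
      (Metric.closedBall x₀ ρ ×ˢ Icc a t) := fun x hx =>
    ((contDiff_cylinderCutoff (n := 0)).continuous.continuousAt.mul
      (contDiffAt_liYau (m := 0) (hf x hx) (by norm_num) timeDir β).continuousAt).continuousWithinAt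
  obtain ⟨z, hz, hmax⟩ :=
    ((isCompact_closedBall x₀ ρ).prod isCompact_Icc).exists_isMaxOn ⟨p, hp⟩ hcont
  refine (hmax hp).trans ?_
  have hβ1 : 0 < β - 1 := sub_pos.2 hβ
  have hta : 0 ≤ t - a := sub_nonneg.2 (hp.2.1.trans hp.2.2)
  rcases le_or_gt (cylinderCutoff x₀ ρ a z * liYau (spaceFrame b) timeDir β f z) 0 with
    nonpos | pos
  · exact nonpos.trans (by positivity)
  have hψ := paraboloid_nonneg hρ hz.1
  have hφ : 0 < cylinderCutoff x₀ ρ a z := by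
    refine (mul_nonneg (sub_nonneg.2 hz.2.1) (mul_nonneg hψ hψ)).lt_of_ne' fun hzero => ?_
    simp only [cylinderCutoff] at hzero pos
    simp [hzero] at pos
  have hq := (pos_iff_pos_of_mul_pos pos).1 hφ
  have hψ0 : paraboloid x₀ ρ z ≠ 0 := fun h => hφ.ne' (by simp [cylinderCutoff, h])
  have hs0 : z.2 - a ≠ 0 := fun h => hφ.ne' (by simp [cylinderCutoff, h])
  have hx : z.1 ∈ Metric.ball x₀ ρ := mem_ball_of_paraboloid_pos hρ (hψ.lt_of_ne' hψ0)
  have hs : z.2 ∈ Ioc a t := ⟨hz.2.1.lt_of_ne' (sub_ne_zero.1 hs0), hz.2.2⟩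
  exact cylinderCutoff_mul_liYau_le_of_isMaxOn hβ hρ (hf z hz) (heat z ⟨hx, hs⟩) hx hs hφ hq hmax

lemma liYau_le_of_closed_cylinder (hβ : 1 < β) (hρ : 0 < ρ) (hat : a < t)
    (hf : ∀ p ∈ Metric.closedBall x₀ ρ ×ˢ Icc a t, ContDiffAt ℝ 3 f p)
    (heat : ∀ p ∈ Metric.ball x₀ ρ ×ˢ Ioc a t, dirDeriv timeDir f =ᶠ[𝓝 p] fun x =>
      frameLaplacian (spaceFrame b) f x + gradInner (spaceFrame b) f f x)
    {x : E} (hx : ‖x - x₀‖ ≤ ρ / 2) :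
    liYau (spaceFrame b) timeDir β f (x, t) ≤
      Fintype.card ι * (5 * Fintype.card ι + 8) * β ^ 2 *
        (β ^ 2 / (ρ ^ 2 * (β - 1)) + 1 / (t - a)) := by
  have hβ1 : 0 < β - 1 := sub_pos.2 hβ
  have hta : 0 < t - a := sub_pos.2 hat
  set d : ℝ := (Fintype.card ι : ℝ)
  set q := liYau (spaceFrame b) timeDir β f (x, t)
  rcases le_or_gt q 0 with nonpos | pos
  · exact nonpos.trans (by positivity)
  have cutoff_ge : (t - a) / 2 ≤ cylinderCutoff x₀ ρ a (x, t) := by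
    have hψ : 3 / 4 ≤ paraboloid x₀ ρ (x, t) := three_quarters_le_paraboloid hρ hx
    calc (t - a) / 2 ≤ (t - a) * (3 / 4 * (3 / 4)) := by linarith
      _ ≤ cylinderCutoff x₀ ρ a (x, t) := by simp only [cylinderCutoff]; gcongr
  have mem_cylinder : (x, t) ∈ Metric.closedBall x₀ ρ ×ˢ Icc a t :=
    ⟨mem_closedBall_iff_norm.2 (by linarith), hat.le, le_rfl⟩
  have localized : (t - a) / 2 * q ≤
      d * β ^ 2 / 2 * ((5 * d + 8) * (β ^ 2 / (ρ ^ 2 * (β - 1))) * (t - a) + 1) :=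
    (mul_le_mul_of_nonneg_right cutoff_ge pos.le).trans
      (cylinderCutoff_mul_liYau_le hβ hρ hf heat mem_cylinder)
  calc q = (t - a) / 2 * q * (2 / (t - a)) := by field_simp
    _ ≤ d * β ^ 2 / 2 * ((5 * d + 8) * (β ^ 2 / (ρ ^ 2 * (β - 1))) * (t - a) + 1) *
          (2 / (t - a)) := by gcongr
    _ = d * β ^ 2 * ((5 * d + 8) * (β ^ 2 / (ρ ^ 2 * (β - 1))) + 1 * (1 / (t - a))) := by
        field_simp
    _ ≤ d * β ^ 2 * ((5 * d + 8) * (β ^ 2 / (ρ ^ 2 * (β - 1))) +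
          (5 * d + 8) * (1 / (t - a))) := by
        gcongr
        linarith [show 0 ≤ d by positivity]
    _ = _ := by ring

-- Shrinking the cylinder by `a` on all sides moves it into the open region where the equation
-- holds in a full neighbourhood of every point.
lemma liYau_le_of_shrunken_cylinder (hβ : 1 < β) (ha : 0 < a) (hat : 2 * a < t)
    (hf : ∀ p ∈ Metric.ball x₀ ρ ×ˢ Ioo 0 t, ContDiffAt ℝ 3 f p)
    (heat : ∀ p ∈ Metric.ball x₀ ρ ×ˢ Ioo 0 t, dirDeriv timeDir f p =
      frameLaplacian (spaceFrame b) f p + gradInner (spaceFrame b) f f p)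
    {x : E} (hx : a < ρ - 2 * ‖x - x₀‖) :
    liYau (spaceFrame b) timeDir β f (x, t - a) ≤
      Fintype.card ι * (5 * Fintype.card ι + 8) * β ^ 2 *
        (β ^ 2 / ((ρ - a) ^ 2 * (β - 1)) + 1 / (t - a - a)) := by
  have cylinder_subset :
      Metric.closedBall x₀ (ρ - a) ×ˢ Icc a (t - a) ⊆ Metric.ball x₀ ρ ×ˢ Ioo 0 t :=
    prod_mono (Metric.closedBall_subset_ball (by linarith))
      (Icc_subset_Ioo ha (by linarith))
  refine liYau_le_of_closed_cylinder hβ (by linarith [norm_nonneg (x - x₀)]) (by linarith)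
    (fun p hp => hf p (cylinder_subset hp)) (fun p hp => ?_) (by linarith)
  have mem_open : p ∈ Metric.ball x₀ ρ ×ˢ Ioo 0 t :=
    cylinder_subset ⟨Metric.ball_subset_closedBall hp.1, Ioc_subset_Icc_self hp.2⟩
  exact Filter.eventually_of_mem ((Metric.isOpen_ball.prod isOpen_Ioo).mem_nhds mem_open) heat

lemma liYau_le_of_cylinder (hβ : 1 < β) (hρ : 0 < ρ) (ht : 0 < t)
    (hf : ∀ p ∈ Metric.ball x₀ ρ ×ˢ Ioc 0 t, ContDiffAt ℝ 3 f p)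
    (heat : ∀ p ∈ Metric.ball x₀ ρ ×ˢ Ioo 0 t, dirDeriv timeDir f p =
      frameLaplacian (spaceFrame b) f p + gradInner (spaceFrame b) f f p)
    {x : E} (hx : ‖x - x₀‖ < ρ / 2) :
    liYau (spaceFrame b) timeDir β f (x, t) ≤
      Fintype.card ι * (5 * Fintype.card ι + 8) * β ^ 2 *
        (β ^ 2 / (ρ ^ 2 * (β - 1)) + 1 / t) := by
  have hβ1 : β - 1 ≠ 0 := (sub_pos.2 hβ).ne'
  have small (c : ℝ) (hc : 0 < c) : ∀ᶠ ε in 𝓝[>] (0 : ℝ), ε < c :=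
    nhdsWithin_le_nhds (eventually_lt_nhds hc)
  have shrunken_estimate : ∀ᶠ ε in 𝓝[>] (0 : ℝ),
      liYau (spaceFrame b) timeDir β f (x, t - ε) ≤
        Fintype.card ι * (5 * Fintype.card ι + 8) * β ^ 2 *
          (β ^ 2 / ((ρ - ε) ^ 2 * (β - 1)) + 1 / (t - ε - ε)) := by
    filter_upwards [self_mem_nhdsWithin, small (ρ - 2 * ‖x - x₀‖) (by linarith),
      small (t / 2) (by linarith)] with ε hε hερ hεt
    exact liYau_le_of_shrunken_cylinder hβ hε (by linarith)
      (fun p hp => hf p ⟨hp.1, Ioo_subset_Ioc_self hp.2⟩) heat hερ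
  have hxt : (x, t) ∈ Metric.ball x₀ ρ ×ˢ Ioc 0 t :=
    ⟨mem_ball_iff_norm.2 (by linarith), ht, le_rfl⟩
  have liYau_continuousAt : ContinuousAt (liYau (spaceFrame b) timeDir β f) (x, t - 0) := by
    rw [sub_zero]
    exact (contDiffAt_liYau (m := 0) (hf _ hxt) (by norm_num) timeDir β).continuousAt
  have lhs_continuousAt :
      ContinuousAt (fun ε : ℝ => liYau (spaceFrame b) timeDir β f (x, t - ε)) 0 :=
    ContinuousAt.comp (f := fun ε : ℝ => (x, t - ε)) liYau_continuousAt (by fun_prop)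
  have rhs_continuousAt : ContinuousAt (fun ε : ℝ =>
      Fintype.card ι * (5 * Fintype.card ι + 8) * β ^ 2 *
        (β ^ 2 / ((ρ - ε) ^ 2 * (β - 1)) + 1 / (t - ε - ε))) 0 := by
    have : (ρ - 0) ^ 2 * (β - 1) ≠ 0 := by simp [hρ.ne', hβ1]
    have : t - 0 - 0 ≠ 0 := by simp [ht.ne']
    fun_prop (disch := assumption)
  simpa using le_of_tendsto_of_tendsto (lhs_continuousAt.tendsto.mono_left nhdsWithin_le_nhds)
    (rhs_continuousAt.tendsto.mono_left nhdsWithin_le_nhds) shrunken_estimate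

end CylinderEstimate

section Slice

variable {E : Type*} [NormedAddCommGroup E] [NormedSpace ℝ E] {U : E × ℝ → ℝ} {x : E} {t : ℝ}

lemma fderiv_space_slice_apply (hU : DifferentiableAt ℝ U (x, t)) (v : E) :
    fderiv ℝ (fun y => U (y, t)) x v = dirDeriv (v, 0) U (x, t) := by
  have h : HasFDerivAt (fun y => U (y, t)) _ x :=
    hU.hasFDerivAt.comp x (hasFDerivAt_prodMk_left x t)
  simp [h.fderiv, dirDeriv]

lemma deriv_time_slice (hU : DifferentiableAt ℝ U (x, t)) :
    deriv (fun s => U (x, s)) t = dirDeriv timeDir U (x, t) :=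
  (hU.hasFDerivAt.comp_hasDerivAt t ((hasDerivAt_const t x).prodMk (hasDerivAt_id t))).deriv

end Slice

lemma norm_gradient_slice_sq {E : Type*} [NormedAddCommGroup E] [InnerProductSpace ℝ E]
    [CompleteSpace E] {ι : Type*} [Fintype ι] (b : OrthonormalBasis ι ℝ E) {U : E × ℝ → ℝ} {x : E}
    {t : ℝ} (hU : DifferentiableAt ℝ U (x, t)) :
    ‖gradient (fun y => U (y, t)) x‖ ^ 2 = gradInner (spaceFrame b) U U (x, t) := by
  rw [← b.sum_sq_inner_left, gradInner]
  refine Finset.sum_congr rfl fun i _ => ?_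
  rw [inner_gradient_left, fderiv_space_slice_apply hU, pow_two, spaceFrame]

lemma laplacian_slice {n : ℕ} {U : EuclideanSpace ℝ (Fin n) × ℝ → ℝ} {x : EuclideanSpace ℝ (Fin n)}
    {t : ℝ} (hU : ContDiffAt ℝ 2 U (x, t)) :
    laplacian (fun y => U (y, t)) x =
      frameLaplacian (spaceFrame (EuclideanSpace.basisFun (Fin n) ℝ)) U (x, t) := by
  refine Finset.sum_congr rfl fun i _ => ?_
  have slice_continuousAt : ContinuousAt (fun y : EuclideanSpace ℝ (Fin n) => (y, t)) x := by
    fun_prop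
  have first_deriv : (fun y => fderiv ℝ (fun z => U (z, t)) y (EuclideanSpace.single i 1)) =ᶠ[𝓝 x]
      fun y => dirDeriv (EuclideanSpace.single i 1, 0) U (y, t) :=
    (slice_continuousAt.eventually (eventually_differentiableAt hU two_ne_zero)).mono
      fun y hy => fderiv_space_slice_apply hy _
  rw [first_deriv.fderiv_eq, fderiv_space_slice_apply (differentiableAt_dirDeriv hU _), spaceFrame,
    EuclideanSpace.basisFun_apply]

theorem local_gradient_estimate_flat_general {n : ℕ} {u : EuclideanSpace ℝ (Fin n) → ℝ → ℝ}
    {x₀ x : EuclideanSpace ℝ (Fin n)} {β ρ t : ℝ} (hβ : 1 < β) (hρ : 0 < ρ) (ht : 0 < t)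
    (hx : ‖x - x₀‖ < ρ / 2)
    (hu : ∀ y ∈ Metric.ball x₀ ρ, ∀ s ∈ Ioc 0 t,
      ContDiffAt ℝ 3 (fun p : EuclideanSpace ℝ (Fin n) × ℝ => u p.1 p.2) (y, s))
    (hpos : ∀ y ∈ Metric.ball x₀ ρ, ∀ s ∈ Ioc 0 t, 0 < u y s)
    (heat : ∀ y ∈ Metric.ball x₀ ρ, ∀ s ∈ Ioo 0 t,
      deriv (fun r => u y r) s = laplacian (fun z => u z s) y) :
    ‖gradient (fun y => u y t) x‖ ^ 2 / (u x t) ^ 2 - β * deriv (fun s => u x s) t / u x t ≤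
      n * (5 * n + 8) * β ^ 2 * (β ^ 2 / (ρ ^ 2 * (β - 1)) + 1 / t) := by
  set U : EuclideanSpace ℝ (Fin n) × ℝ → ℝ := fun p => u p.1 p.2
  set b := EuclideanSpace.basisFun (Fin n) ℝ
  have log_heat : ∀ p ∈ Metric.ball x₀ ρ ×ˢ Ioo 0 t,
      dirDeriv timeDir (fun z => Real.log (U z)) p =
        frameLaplacian (spaceFrame b) (fun z => Real.log (U z)) p +
          gradInner (spaceFrame b) (fun z => Real.log (U z)) (fun z => Real.log (U z)) p := by
    rintro ⟨y, s⟩ ⟨hy, hs⟩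
    have hU : ContDiffAt ℝ 2 U (y, s) := (hu y hy s (Ioo_subset_Ioc_self hs)).of_le (by norm_num)
    refine dirDeriv_log_of_heat hU (hpos y hy s (Ioo_subset_Ioc_self hs)) ?_
    rw [← deriv_time_slice (hU.differentiableAt two_ne_zero), ← laplacian_slice hU]
    exact heat y hy s hs
  have estimate := liYau_le_of_cylinder (b := b) hβ hρ ht
    (fun p hp => (hu p.1 hp.1 p.2 hp.2).log (hpos p.1 hp.1 p.2 hp.2).ne') log_heat hx
  have hx_ball : x ∈ Metric.ball x₀ ρ := mem_ball_iff_norm.2 (by linarith)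
  have hU : DifferentiableAt ℝ U (x, t) :=
    (hu x hx_ball t ⟨ht, le_rfl⟩).differentiableAt three_ne_zero
  rw [liYau_log hU (hpos x hx_ball t ⟨ht, le_rfl⟩).ne', ← norm_gradient_slice_sq b hU,
    ← deriv_time_slice hU, Fintype.card_fin] at estimate
  exact estimate

/-- The local Li–Yau-type gradient estimate of Theorem 1.2 in the static Euclidean
case: there is `C′ = C′(n) > 0` such that every positive solution of the heat
equation satisfies `‖∇u‖²/u² − β uₜ/u ≤ C′β²(β²/(ρ²(β−1)) + 1/t)` on the ball of
radius `ρ/2` about `x₀`, for every `β > 1`. -/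
theorem local_gradient_estimate_flat (n : ℕ) (hn : 1 ≤ n) :
    ∃ C' : ℝ, 0 < C' ∧
      ∀ T : ℝ, 0 < T →
        ∀ u : EuclideanSpace ℝ (Fin n) → ℝ → ℝ,
          ContDiff ℝ (⊤ : ℕ∞) (fun p : EuclideanSpace ℝ (Fin n) × ℝ => u p.1 p.2) →
          (∀ x, ∀ t ∈ Set.Icc 0 T, 0 < u x t) →
          (∀ x, ∀ t ∈ Set.Icc 0 T,
            deriv (fun s => u x s) t = laplacian (fun y => u y t) x) →
          ∀ β : ℝ, 1 < β → ∀ ρ : ℝ, 0 < ρ →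
            ∀ x₀ x : EuclideanSpace ℝ (Fin n), ‖x - x₀‖ < ρ / 2 →
              ∀ t ∈ Set.Ioc 0 T,
                ‖gradient (fun y => u y t) x‖ ^ 2 / (u x t) ^ 2 -
                    β * deriv (fun s => u x s) t / u x t ≤
                  C' * β ^ 2 * (β ^ 2 / (ρ ^ 2 * (β - 1)) + 1 / t) := by
  refine ⟨n * (5 * n + 8), by positivity, fun T _ u hu hpos heat β hβ ρ hρ x₀ x hx t ht => ?_⟩
  exact local_gradient_estimate_flat_general hβ hρ ht.1 hx
    (fun _ _ _ _ => (contDiff_infty.1 hu 3).contDiffAt)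
    (fun y _ s hs => hpos y s ⟨hs.1.le, hs.2.trans ht.2⟩)
    (fun y _ s hs => heat y s ⟨hs.1.le, hs.2.le.trans ht.2⟩)
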